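/- arXiv:1607.00127 — 2 statements merged into one kernel-verified Lean document; each statement's English description precedes it below -/
import Mathlib

section
/- Let d ≥ 1, n ≥ 1, N ≥ 1, let u_0, …, u_{N-1} ∈ ℝ^n, and let U be the N × n^d real matrix with columns indexed by tuples (i_1,…,i_d) ∈ {1,…,n}^d and entries U_{t,(i_1,…,i_d)} = ∏_{k=1}^{d} (u_t)_{i_k}. Let y ∈ ℝ^N and suppose v* ∈ ℝ^{n^d} is a minimum-norm solution of U v = y, i.e. U v* = y and ‖v*‖₂ ≤ ‖w‖₂ for every w ∈ ℝ^{n^d} with U w = y. Then v* is symmetric: v*_{(i_{σ(1)},…,i_{σ(d)})} = v*_{(i_1,…,i_d)} for every permutation σ of {1,…,d} and every tuple (i_1,…,i_d). -/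
/-!
The rows of `U` are symmetric tensors, so permuting the tensor slots of `v` gives another solution
of `U v = y`, of the same norm. The solution set is affine, so it also contains the midpoint of the
two, and the parallelogram identity makes the midpoint strictly shorter than `v` unless the two
solutions coincide.
-/


/-- A minimum-norm solution `v` of `U v = y` (with respect to
the Euclidean norm `‖v‖₂ = √(∑ v_i²)`), where `U` is the matrix whose `t`-th
row is the `d`-fold Kronecker power `(u_t^{⊗d})ᵀ`, is symmetric:
`v_{(i_{σ(1)},…,i_{σ(d)})} = v_{(i_1,…,i_d)}` for every permutation `σ`. -/
theorem min_norm_solution_is_symmetric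
    (d n N : ℕ) (hd : 1 ≤ d) (hn : 1 ≤ n) (hN : 1 ≤ N)
    (u : Fin N → Fin n → ℝ)
    (U : Matrix (Fin N) (Fin d → Fin n) ℝ)
    (hU : ∀ (t : Fin N) (i : Fin d → Fin n), U t i = ∏ k : Fin d, u t (i k))
    (y : Fin N → ℝ) (v : (Fin d → Fin n) → ℝ)
    (hv : U.mulVec v = y)
    (hmin : ∀ w : (Fin d → Fin n) → ℝ, U.mulVec w = y →
      Real.sqrt (∑ i, v i ^ 2) ≤ Real.sqrt (∑ i, w i ^ 2)) :
    ∀ (σ : Equiv.Perm (Fin d)) (i : Fin d → Fin n), v (i ∘ σ) = v i := by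
  intro σ i
  let e : (Fin d → Fin n) ≃ (Fin d → Fin n) := Equiv.arrowCongr σ.symm (Equiv.refl _)
  have he : ∀ j, e j = j ∘ σ := fun j => rfl
  have hUe : ∀ t j, U t (e j) = U t j := by
    intro t j
    rw [hU, hU, he]
    exact Equiv.prod_comp σ fun k => u t (j k)
  have hw : U.mulVec (fun j => v (e j)) = y := by
    rw [← hv]
    ext t
    simp only [Matrix.mulVec, dotProduct]
    rw [← Equiv.sum_comp e fun j => U t j * v j]
    simp only [hUe]
  have hm : U.mulVec ((1 / 2 : ℝ) • (v + fun j => v (e j))) = y := by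
    rw [Matrix.mulVec_smul, Matrix.mulVec_add, hv, hw]
    ext t
    simp only [Pi.smul_apply, Pi.add_apply, smul_eq_mul]
    ring
  have hle := (Real.sqrt_le_sqrt_iff (Finset.sum_nonneg fun j _ => sq_nonneg _)).1 (hmin _ hm)
  have hnorm : ∑ j, v (e j) ^ 2 = ∑ j, v j ^ 2 := Equiv.sum_comp e fun j => v j ^ 2
  have hpar : ∑ j, (v (e j) - v j) ^ 2 = 2 * ∑ j, v (e j) ^ 2 + 2 * ∑ j, v j ^ 2
      - 4 * ∑ j, ((1 / 2 : ℝ) • (v + fun j => v (e j))) j ^ 2 := by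
    simp only [Finset.mul_sum, ← Finset.sum_add_distrib, ← Finset.sum_sub_distrib]
    refine Finset.sum_congr rfl fun j _ => ?_
    simp only [Pi.smul_apply, Pi.add_apply, smul_eq_mul]
    ring
  have hi : (v (e i) - v i) ^ 2 ≤ ∑ j, (v (e j) - v j) ^ 2 :=
    Finset.single_le_sum (f := fun j => (v (e j) - v j) ^ 2)
      (fun j _ => sq_nonneg _) (Finset.mem_univ i)
  have hsq : (v (e i) - v i) ^ 2 = 0 := le_antisymm (by linarith) (sq_nonneg _)
  exact sub_eq_zero.1 (pow_eq_zero_iff two_ne_zero |>.1 hsq)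
end

section
/- Let d ≥ 1, n ≥ 1, N ≥ 1, let u_0, …, u_{N-1} ∈ ℝ^n, and let U be the N × n^d real matrix with columns indexed by tuples (i_1,…,i_d) ∈ {1,…,n}^d and entries U_{t,(i_1,…,i_d)} = ∏_{k=1}^{d} (u_t)_{i_k}. Suppose the inputs are persistently exciting of order d, i.e. rank(U) = C(n - 1 + d, d). Let y ∈ ℝ^N and let v, w ∈ ℝ^{n^d} both be symmetric vectors satisfying U v = y and U w = y. Then v = w; that is, the symmetric solution of U v = y is unique. -/
/-!
The entry `U t i` depends on the tuple `i` only through the multiset of its values, an element of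
`Sym (Fin n) d`, so `U = M * P` where `M` has one column per multiset and `P` is the 0-1 matrix
summing a vector over each class of tuples. By stars and bars, `M` has `C(n - 1 + d, d)` columns,
so the rank hypothesis makes `M` injective. Thus `z = v - w`, which satisfies `U z = 0`, satisfies
`P z = 0`: its sum over each class vanishes. A symmetric vector is constant on classes
(`exists_perm_of_tupleSym_eq`), hence `z = 0`.
-/

/-- The multiset of values of a tuple, with multiplicities, as an element of the symmetric power. -/
def tupleSym {d n : ℕ} (i : Fin d → Fin n) : Sym (Fin n) d :=
  ⟨Finset.univ.val.map i, by simp⟩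

/-- Tuples with the same multiset of values differ by a permutation of positions: all their
fibres have the same size, and bijections between the fibres glue together. -/
lemma exists_perm_of_tupleSym_eq {d n : ℕ} {i j : Fin d → Fin n}
    (h : tupleSym i = tupleSym j) : ∃ σ : Equiv.Perm (Fin d), j ∘ σ = i := by
  have hval : Finset.univ.val.map i = Finset.univ.val.map j := congrArg Subtype.val h
  have e : ∀ c, Nonempty ({a // i a = c} ≃ {b // j b = c}) := by
    intro c
    have hc := congrArg (Multiset.count c) hval
    rw [Multiset.count_map, Multiset.count_map] at hc
    refine ⟨Fintype.equivOfCardEq ?_⟩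
    rw [Fintype.card_subtype, Fintype.card_subtype]
    simpa only [Finset.card_def, Finset.filter_val, eq_comm] using hc
  exact ⟨Equiv.ofFiberEquiv fun c => (e c).some, funext fun a => Equiv.ofFiberEquiv_map _ a⟩

lemma mulVec_eq_zero_of_rank_eq_card {m k : Type*} [Fintype m] [Fintype k]
    (M : Matrix m k ℝ) (h : Fintype.card k ≤ M.rank) {c : k → ℝ} (hc : M.mulVec c = 0) :
    c = 0 := by
  have h1 := LinearMap.finrank_range_add_finrank_ker M.mulVecLin
  rw [Module.finrank_fintype_fun_eq_card] at h1
  have h2 : Module.finrank ℝ (LinearMap.ker M.mulVecLin) = 0 := by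
    unfold Matrix.rank at h
    omega
  have h3 := Submodule.finrank_eq_zero.mp h2
  exact (Submodule.mem_bot ℝ).mp (h3 ▸ LinearMap.mem_ker.mpr hc)


/-- If the inputs are persistently exciting of order `d`,
i.e. `rank(U) = C(n - 1 + d, d)` where `U` is the matrix whose `t`-th row is
the `d`-fold Kronecker power `(u_t^{⊗d})ᵀ`, then the symmetric solution of
`U v = y` is unique: any two symmetric solutions coincide. -/
theorem symmetric_solution_unique
    (d n N : ℕ) (hd : 1 ≤ d) (hn : 1 ≤ n) (hN : 1 ≤ N)
    (u : Fin N → Fin n → ℝ)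
    (U : Matrix (Fin N) (Fin d → Fin n) ℝ)
    (hU : ∀ (t : Fin N) (i : Fin d → Fin n), U t i = ∏ k : Fin d, u t (i k))
    (hrank : U.rank = Nat.choose (n - 1 + d) d)
    (y : Fin N → ℝ) (v w : (Fin d → Fin n) → ℝ)
    (hvsym : ∀ (σ : Equiv.Perm (Fin d)) (i : Fin d → Fin n), v (i ∘ σ) = v i)
    (hwsym : ∀ (σ : Equiv.Perm (Fin d)) (i : Fin d → Fin n), w (i ∘ σ) = w i)
    (hv : U.mulVec v = y) (hw : U.mulVec w = y) :
    v = w := by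
  let M : Matrix (Fin N) (Sym (Fin n) d) ℝ := fun t s => (s.val.map (u t)).prod
  let P : Matrix (Sym (Fin n) d) (Fin d → Fin n) ℝ := fun s i => if tupleSym i = s then 1 else 0
  have hUMP : U = M * P := by
    ext t i
    rw [hU, Matrix.mul_apply]
    simp only [M, P, mul_ite, mul_one, mul_zero, Finset.sum_ite_eq, Finset.mem_univ, if_true]
    rw [tupleSym, Multiset.map_map]
    rfl
  have hcard : Fintype.card (Sym (Fin n) d) ≤ M.rank := by
    rw [Sym.card_sym_eq_choose, Fintype.card_fin, show n + d - 1 = n - 1 + d by omega, ← hrank,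
      hUMP]
    exact Matrix.rank_mul_le_left M P
  have hP : P.mulVec (v - w) = 0 := by
    apply mulVec_eq_zero_of_rank_eq_card M hcard
    rw [Matrix.mulVec_mulVec, ← hUMP, Matrix.mulVec_sub, hv, hw, sub_self]
  funext i
  have hconst : ∀ j, tupleSym j = tupleSym i → (v - w) j = (v - w) i := by
    intro j hj
    obtain ⟨σ, rfl⟩ := exists_perm_of_tupleSym_eq hj
    simp [hvsym, hwsym]
  have hi := congrFun hP (tupleSym i)
  -- The class sum at `i` is the class size times `(v - w) i`, and the class contains `i`.
  have hsum : P.mulVec (v - w) (tupleSym i) =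
      (Finset.univ.filter fun j : Fin d → Fin n => tupleSym j = tupleSym i).card *
        (v - w) i := by
    rw [← nsmul_eq_mul, ← Finset.sum_const, Finset.sum_filter]
    refine Finset.sum_congr rfl fun j _ => ?_
    by_cases hj : tupleSym j = tupleSym i
    · simp only [P, hj, if_true, one_mul, hconst j hj]
    · simp only [P, hj, if_false, zero_mul]
  rw [hsum] at hi
  have hne : (Finset.univ.filter fun j : Fin d → Fin n => tupleSym j = tupleSym i).card ≠ 0 :=
    Finset.card_ne_zero_of_mem (a := i) (by simp)
  have hz := (mul_eq_zero.mp hi).resolve_left (Nat.cast_ne_zero.mpr hne)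
  exact sub_eq_zero.mp hz
end
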